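/- Let μ_n = ∫_{−1}^{1} T_n(x) · log(2/(1−x)) dx, where T_n is the Chebyshev polynomial of the first kind. Then for every n ≥ 0: 2n(2n+2)·μ_{2n+1} = Σ_{k=0}^{n−1} 4(2k+2)/(1−(2k+2)²). -/

import Mathlib

open Polynomial MeasureTheory

namespace LogW
open Polynomial.Chebyshev

/-- Integration by parts against the log weight. -/
lemma parts (A Q : ℝ[X]) (h : A = (1 - X) * Q) :
    ∫ x in (-1 : ℝ)..1, (derivative A).eval x * Real.log (2 / (1 - x))
      = -∫ x in (-1 : ℝ)..1, Q.eval x := by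
  have hlog : ∀ x : ℝ, (1 - x) * Real.log (2 / (1 - x))
      = (1 - x) * Real.log 2 - (1 - x) * Real.log (1 - x) := by
    intro x
    by_cases hx : 1 - x = 0
    · simp [hx]
    · rw [Real.log_div (by norm_num) hx]; ring
  have hA : ∀ x : ℝ, A.eval x = (1 - x) * Q.eval x := by
    intro x; rw [h]; simp
  have hcont : Continuous fun x : ℝ => A.eval x * Real.log (2 / (1 - x)) := by
    have : (fun x : ℝ => A.eval x * Real.log (2 / (1 - x))) = fun x =>
        Q.eval x * ((1 - x) * Real.log 2 - (1 - x) * Real.log (1 - x)) := by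
      funext x; rw [hA, ← hlog]; ring
    rw [this]
    have h1 : Continuous fun x : ℝ => (1 - x) * Real.log (1 - x) :=
      Real.continuous_mul_log.comp (continuous_const.sub continuous_id)
    have h2 : Continuous fun x : ℝ => Q.eval x := Q.continuous
    fun_prop
  have hlogint : IntervalIntegrable (fun x : ℝ => Real.log (2 / (1 - x))) volume (-1) 1 := by
    have h0 : IntervalIntegrable (fun x : ℝ => Real.log (1 - x)) volume (-1) 1 := by
      have := (intervalIntegral.intervalIntegrable_log' (a := 2) (b := 0)).comp_sub_left 1
      norm_num at this
      exact this
    have h3 : IntervalIntegrable (fun x : ℝ => Real.log 2 - Real.log (1 - x)) volume (-1) 1 :=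
      (intervalIntegrable_const).sub h0
    refine (h3.congr_ae ?_)
    have : ∀ᵐ x : ℝ ∂volume, x ≠ 1 := by
      simp [ae_iff]
    refine ae_restrict_of_ae ?_
    filter_upwards [this] with x hx
    rw [Real.log_div (by norm_num) (sub_ne_zero.mpr hx.symm)]
  have hQint : IntervalIntegrable (fun x : ℝ => Q.eval x) volume (-1) 1 :=
    Q.continuous.intervalIntegrable _ _
  have hfint : IntervalIntegrable (fun x : ℝ => (derivative A).eval x * Real.log (2 / (1 - x)))
      volume (-1) 1 := hlogint.continuousOn_mul (derivative A).continuous.continuousOn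
  have key := intervalIntegral.integral_eq_sub_of_hasDerivAt_of_le (a := -1) (b := 1)
    (f := fun x : ℝ => A.eval x * Real.log (2 / (1 - x)))
    (f' := fun x : ℝ => (derivative A).eval x * Real.log (2 / (1 - x)) + Q.eval x)
    (by norm_num) hcont.continuousOn ?_ (hfint.add hQint)
  · rw [intervalIntegral.integral_add hfint hQint] at key
    norm_num at key
    linarith
  · intro x hx
    have hx1 : (1 - x) ≠ 0 := by have := hx.2; intro h; linarith
    have d1 : HasDerivAt (fun x : ℝ => 2 / (1 - x)) (2 / (1 - x) ^ 2) x := by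
      have := ((hasDerivAt_id x).const_sub 1).inv hx1
      have := this.const_mul 2
      refine HasDerivAt.congr_deriv (f' := 2 * (-(-1) / (1 - x) ^ 2)) this (by ring)
    have d2 := (A.hasDerivAt x).mul (d1.log (by positivity))
    refine HasDerivAt.congr_deriv d2 ?_
    rw [hA]
    field_simp

lemma exists_q (n : ℕ) : ∃ q : ℝ[X], 1 - T ℝ (2 * n) = (1 - X) * q := by
  have : (X - Polynomial.C 1 : ℝ[X]) ∣ 1 - T ℝ (2 * n) := by
    rw [dvd_iff_isRoot]; simp
  obtain ⟨q, hq⟩ := this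
  exact ⟨-q, by rw [hq]; simp; ring⟩

/-- `(1 - T_{2n})/(1-x)`. -/
noncomputable def q (n : ℕ) : ℝ[X] := (exists_q n).choose

lemma q_spec (n : ℕ) : 1 - T ℝ (2 * n) = (1 - X) * q n := (exists_q n).choose_spec

lemma one_sub_X_ne : (1 - X : ℝ[X]) ≠ 0 := by
  intro h
  have := congrArg (Polynomial.eval 0) h
  simp at this

lemma q_zero : q 0 = 0 := by
  have := q_spec 0
  simp at this
  rcases this with h | h
  · exact absurd h one_sub_X_ne
  · exact h

lemma q_rec (n : ℕ) : q (n + 2) - 2 * q (n + 1) + q n = 4 * (1 + X) * T ℝ (2 * n + 2) := by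
  apply mul_left_cancel₀ one_sub_X_ne
  have h0 := q_spec n
  have h1 := q_spec (n + 1)
  have h2 := q_spec (n + 2)
  have h := T_mul_T ℝ (2 * n + 2) 2
  rw [T_two] at h
  push_cast at h1 h2
  rw [show (2 * ((n : ℤ) + 1)) = 2 * n + 2 by ring] at h1
  rw [show (2 * ((n : ℤ) + 2)) = 2 * n + 2 + 2 by ring] at h2
  rw [show (2 * (n : ℤ) + 2 - 2) = 2 * n by ring] at h
  linear_combination -h0 + 2 * h1 - h2 + h

lemma deriv_id (m : ℤ) : 2 * ((m : ℝ[X]) + 1) * (m - 1) * T ℝ m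
    = (m - 1) * derivative (T ℝ (m + 1)) - (m + 1) * derivative (T ℝ (m - 1)) := by
  rw [T_derivative_eq_U, T_derivative_eq_U]
  have h := two_mul_T_eq_U_sub_U ℝ (m - 2)
  rw [show m - 2 + 2 = m by ring] at h
  rw [show m + 1 - 1 = m by ring, show m - 1 - 1 = m - 2 by ring]
  push_cast
  linear_combination ((m : ℝ[X]) + 1) * (m - 1) * h

lemma int_even (n : ℕ) : ∫ x in (-1 : ℝ)..1, (T ℝ (2 * n + 2)).eval x
    = 2 / (1 - (2 * (n : ℝ) + 2) ^ 2) := by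
  have hd := deriv_id (2 * n + 2)
  have key := intervalIntegral.integral_eq_sub_of_hasDerivAt (a := -1) (b := 1)
    (f := fun x : ℝ => (2 * (n : ℝ) + 1) * (T ℝ (2 * n + 2 + 1)).eval x
        - (2 * n + 3) * (T ℝ (2 * n + 2 - 1)).eval x)
    (f' := fun x : ℝ => 2 * (2 * (n : ℝ) + 3) * (2 * n + 1) * (T ℝ (2 * n + 2)).eval x) ?_ ?_
  · rw [intervalIntegral.integral_const_mul] at key
    simp only [T_eval_one, T_eval_neg_one] at key
    rw [Int.negOnePow_odd _ ⟨n + 1, by ring⟩, Int.negOnePow_odd _ ⟨n, by ring⟩] at key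
    have h : (1 - (2 * (n : ℝ) + 2) ^ 2) ≠ 0 := by
      have : (0 : ℝ) ≤ n := n.cast_nonneg
      intro h; nlinarith
    rw [eq_div_iff h]
    push_cast at key
    linear_combination (-1 / 2) * key
  · intro x _
    have d := (((T ℝ (2 * n + 2 + 1)).hasDerivAt x).const_mul (2 * (n : ℝ) + 1)).sub
      (((T ℝ (2 * n + 2 - 1)).hasDerivAt x).const_mul (2 * (n : ℝ) + 3))
    refine HasDerivAt.congr_deriv d ?_
    have := congrArg (Polynomial.eval x) hd
    simp [-T_add_two] at this
    linear_combination -this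
  · apply Continuous.intervalIntegrable
    have : Continuous fun x : ℝ => (T ℝ (2 * n + 2)).eval x := Polynomial.continuous _
    fun_prop

lemma int_odd (n : ℕ) : ∫ x in (-1 : ℝ)..1, x * (T ℝ (2 * n + 2)).eval x = 0 := by
  have h := intervalIntegral.integral_comp_neg (a := -1) (b := 1)
    (fun x : ℝ => x * (T ℝ (2 * n + 2)).eval x)
  simp only [T_eval_neg, neg_neg] at h
  rw [Int.negOnePow_even _ ⟨n + 1, by ring⟩] at h
  simp [-T_add_two] at h
  linarith

lemma ii (p : ℝ[X]) : IntervalIntegrable (fun x : ℝ => p.eval x) volume (-1) 1 :=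
  p.continuous.intervalIntegrable _ _

lemma I_rec (n : ℕ) : (∫ x in (-1 : ℝ)..1, (q (n + 2)).eval x)
    - 2 * (∫ x in (-1 : ℝ)..1, (q (n + 1)).eval x) + ∫ x in (-1 : ℝ)..1, (q n).eval x
    = 8 / (1 - (2 * (n : ℝ) + 2) ^ 2) := by
  rw [← intervalIntegral.integral_const_mul,
    ← intervalIntegral.integral_sub (ii _) ((ii _).const_mul 2),
    ← intervalIntegral.integral_add ((ii _).sub ((ii _).const_mul 2)) (ii _)]
  have : ∀ x : ℝ, (q (n + 2)).eval x - 2 * (q (n + 1)).eval x + (q n).eval x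
      = 4 * ((T ℝ (2 * n + 2)).eval x + x * (T ℝ (2 * n + 2)).eval x) := by
    intro x
    have := congrArg (Polynomial.eval x) (q_rec n)
    simp [-T_add_two] at this
    linear_combination this
  simp only [this]
  have hx : IntervalIntegrable (fun x : ℝ => x * (T ℝ (2 * n + 2)).eval x) volume (-1) 1 := by
    have := ii (X * T ℝ (2 * n + 2))
    have e : (fun x : ℝ => (X * T ℝ (2 * n + 2)).eval x)
        = fun x : ℝ => x * (T ℝ (2 * n + 2)).eval x := by
      funext x; rw [eval_mul, eval_X]
    rwa [e] at this
  rw [intervalIntegral.integral_const_mul, intervalIntegral.integral_add (ii _) hx,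
    int_even, int_odd]
  ring

lemma sum_eq (n : ℕ) : (n : ℝ) * (∫ x in (-1 : ℝ)..1, (q (n + 1)).eval x)
    - (n + 1) * ∫ x in (-1 : ℝ)..1, (q n).eval x
    = ∑ k ∈ Finset.range n, 4 * (2 * (k : ℝ) + 2) / (1 - (2 * (k : ℝ) + 2) ^ 2) := by
  induction n with
  | zero => simp [q_zero]
  | succ n ih =>
    rw [Finset.sum_range_succ, ← ih]
    have := I_rec n
    push_cast
    linear_combination ((n : ℝ) + 1) * this

end LogW

/-- For the moments `μ_n = ∫_{-1}^1 T_n(x) log(2/(1-x)) dx`, the odd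
moments satisfy `2n(2n+2) μ_{2n+1} = ∑_{k=0}^{n-1} 4(2k+2)/(1-(2k+2)²)`. -/
theorem logweight_odd_moments
    (μ : ℕ → ℝ)
    (hμ : ∀ n : ℕ, μ n = ∫ x in (-1 : ℝ)..1,
      (Polynomial.Chebyshev.T ℝ n).eval x * Real.log (2 / (1 - x))) :
    ∀ n : ℕ, (2 * (n : ℝ)) * (2 * (n : ℝ) + 2) * μ (2 * n + 1)
      = ∑ k ∈ Finset.range n, 4 * (2 * (k : ℝ) + 2) / (1 - (2 * (k : ℝ) + 2) ^ 2) := by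
  intro n
  rw [← LogW.sum_eq, hμ]
  have h0 := LogW.q_spec n
  have h1 := LogW.q_spec (n + 1)
  have hp := LogW.parts
    ((n : ℝ[X]) * (1 - Polynomial.Chebyshev.T ℝ (2 * (n + 1 : ℕ)))
      - ((n : ℝ[X]) + 1) * (1 - Polynomial.Chebyshev.T ℝ (2 * n)))
    (n * LogW.q (n + 1) - ((n : ℝ[X]) + 1) * LogW.q n) (by rw [h0, h1]; ring)
  have hd := LogW.deriv_id (2 * n + 1)
  have hL : ∀ x : ℝ, (derivative ((n : ℝ[X]) * (1 - Polynomial.Chebyshev.T ℝ (2 * (n + 1 : ℕ)))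
      - ((n : ℝ[X]) + 1) * (1 - Polynomial.Chebyshev.T ℝ (2 * n)))).eval x * Real.log (2 / (1 - x))
      = -((2 * (n : ℝ)) * (2 * (n : ℝ) + 2)) *
        ((Polynomial.Chebyshev.T ℝ (2 * n + 1 : ℕ)).eval x * Real.log (2 / (1 - x))) := by
    intro x
    rw [← mul_assoc]
    congr 1
    have := congrArg (Polynomial.eval x) hd
    rw [show (2 * (n : ℤ) + 1 + 1) = 2 * (n + 1 : ℕ) by push_cast; ring,
      show (2 * (n : ℤ) + 1 - 1) = 2 * n by ring] at this
    simp at this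
    simp
    linear_combination (1 / 2) * this
  simp only [hL] at hp
  rw [intervalIntegral.integral_const_mul] at hp
  have hR : ∀ x : ℝ, ((n : ℝ[X]) * LogW.q (n + 1) - ((n : ℝ[X]) + 1) * LogW.q n).eval x
      = (n : ℝ) * (LogW.q (n + 1)).eval x - ((n : ℝ) + 1) * (LogW.q n).eval x := by
    intro x; simp
  simp only [hR] at hp
  rw [intervalIntegral.integral_sub ((LogW.ii _).const_mul _) ((LogW.ii _).const_mul _),
    intervalIntegral.integral_const_mul, intervalIntegral.integral_const_mul] at hp
  linarith
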